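/- Let θ = (θ_d)_{d ∈ ℕ^n×ℕ} be strictly positive reals with Σ_d θ_d · max(1,γ)^{d_y + 1} < ∞. If for each r ≥ max_j d_j, φ^r is an optimal solution of the problem inf { Σ_{d ∈ ℕ^{n+1}_{2r}} θ_d φ_d : φ feasible at order r }, then lim_{r→∞} Σ_{d ∈ ℕ^{n+1}_{2r}} θ_d φ^r_d = Σ_{d ∈ ℕ^n×ℕ} θ_d μ_d, and lim_{r→∞} φ^r_d = μ_d for every d ∈ ℕ^n × ℕ. -/

import Mathlib

open MeasureTheory Set

noncomputable section

/-- The finite set `ℕ^{n+1}_r` of multi-indices `d ∈ ℕ^n × ℕ` with `|d| ≤ r`. -/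
def idx (n r : ℕ) : Finset ((Fin n → ℕ) × ℕ) :=
  Finset.filter (fun d => (∑ i, d.1 i) + d.2 ≤ r)
    ((Fintype.piFinset fun _ : Fin n => Finset.range (r + 1)) ×ˢ Finset.range (r + 1))

/-- Multi-indices `e ∈ ℕ^n` with `|e| ≤ r`. -/
def xIdx (n r : ℕ) : Finset (Fin n → ℕ) :=
  Finset.filter (fun e => ∑ i, e i ≤ r) (Fintype.piFinset fun _ : Fin n => Finset.range (r + 1))

/-- Evaluation of a polynomial in `x` of degree `≤ r` given by its coefficients `c`. -/
def polyEval (n r : ℕ) (c : (Fin n → ℕ) → ℝ) (x : Fin n → ℝ) : ℝ :=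
  ∑ e ∈ xIdx n r, c e * ∏ i, x i ^ e i

/-- The moment matrix `M_r(φ)`, with rows and columns indexed by `ℕ^{n+1}_r`. -/
def momMat (n r : ℕ) (φ : ((Fin n → ℕ) × ℕ) → ℝ) : Matrix (idx n r) (idx n r) ℝ :=
  fun a b => φ (fun i => a.1.1 i + b.1.1 i, a.1.2 + b.1.2)

/-- The localizing matrix `M_{r−t}(g φ)` of a polynomial `g` in `x` with coefficients `c`
and degree `≤ 2t`. -/
def locMatX (n : ℕ) (c : (Fin n → ℕ) → ℝ) (t r : ℕ) (φ : ((Fin n → ℕ) × ℕ) → ℝ) :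
    Matrix (idx n (r - t)) (idx n (r - t)) ℝ :=
  fun a b => ∑ e ∈ xIdx n (2 * t),
    c e * φ (fun i => e i + a.1.1 i + b.1.1 i, a.1.2 + b.1.2)

/-- The localizing matrix `M_{r−1}(g_{m+1} φ)` of the polynomial `g_{m+1}(x,y) = y(γ−y)`. -/
def locMatY (n : ℕ) (γ : ℝ) (r : ℕ) (φ : ((Fin n → ℕ) × ℕ) → ℝ) :
    Matrix (idx n (r - 1)) (idx n (r - 1)) ℝ :=
  fun a b => γ * φ (fun i => a.1.1 i + b.1.1 i, a.1.2 + b.1.2 + 1)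
    - φ (fun i => a.1.1 i + b.1.1 i, a.1.2 + b.1.2 + 2)

/-- Feasibility of a pseudo-moment sequence `φ` at relaxation order `r`:
`M_r(φ) ⪰ 0`, `M_{r−d_j}(g_j φ) ⪰ 0` for `j = 1,…,m+1`, and `φ_d = μ_d` for all
`d ∈ D = {d : d_y ≤ 1}` with `|d| ≤ 2r`. -/
def Feasible (n m : ℕ) (γ : ℝ) (g : Fin m → (Fin n → ℕ) → ℝ) (t : Fin m → ℕ)
    (μmom : ((Fin n → ℕ) × ℕ) → ℝ) (r : ℕ) (φ : ((Fin n → ℕ) × ℕ) → ℝ) : Prop :=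
  (momMat n r φ).PosSemidef ∧
  (∀ j, (locMatX n (g j) (t j) r φ).PosSemidef) ∧
  (locMatY n γ r φ).PosSemidef ∧
  ∀ d : (Fin n → ℕ) × ℕ, d.2 ≤ 1 → (∑ i, d.1 i) + d.2 ≤ 2 * r → φ d = μmom d

/-!
A limit `l` of feasible sequences along an ultrafilter defines a linear functional `L` on
polynomials in `(x, y)` that is nonnegative on squares and on `y` times squares, and that integrates
polynomials of degree at most one in `y` against the graph measure `μ`. Since `L` is given by `lam`
on polynomials in `x`, Cauchy–Schwarz and the uniform approximation of `√w` by polynomials make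
`L (w b)` nonnegative whenever `w ≥ 0` on the cube and `L (p² b) ≥ 0` for every `p`. Applied to the
tangent inequality `y^(k+1) ≥ (k+1) q(x)^k y - k q(x)^(k+1)`, which is exact up to multiples of
`(y - q(x))²`, and letting the polynomials `q` tend to `f` almost everywhere, this gives `μ ≤ l`
on all monomials.

Hence `(μ_d - φ^r_d)⁺ → 0` for every `d`. The moments of `μ` are feasible, so optimality gives
`∑ θ_d φ^r_d ≤ ∑ θ_d μ_d`. Feasible sequences satisfy `|φ_d| ≤ γ^(d_y)`, so by dominated convergence
these one-sided bounds force `∑ θ_d |φ^r_d - μ_d| → 0`.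
-/

open Filter Topology

section PolynomialApproximation

variable {σ : Type*} {K : Set (σ → ℝ)}

/-- Restriction of real polynomials to continuous functions on `K`. -/
def evalOn (K : Set (σ → ℝ)) : MvPolynomial σ ℝ →ₐ[ℝ] C(K, ℝ) :=
  MvPolynomial.aeval fun i => ⟨fun x => x.1 i, (continuous_apply i).comp continuous_subtype_val⟩

lemma evalOn_apply (p : MvPolynomial σ ℝ) (x : K) : evalOn K p x = MvPolynomial.eval x.1 p := by
  induction p using MvPolynomial.induction_on with
  | C a => simp [evalOn]
  | add p q hp hq => simp [hp, hq]
  | mul_X p i hp => rw [map_mul, ContinuousMap.mul_apply, hp]; simp [evalOn]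

lemma denseRange_evalOn (hK : IsCompact K) : DenseRange (evalOn K) := by
  have : CompactSpace K := isCompact_iff_compactSpace.mp hK
  have hsep : (evalOn K).range.SeparatesPoints := by
    intro x y hxy
    obtain ⟨i, hi⟩ := Function.ne_iff.mp (Subtype.coe_injective.ne hxy)
    exact ⟨_, ⟨_, ⟨MvPolynomial.X i, rfl⟩, rfl⟩, by simpa [evalOn_apply] using hi⟩
  have htop := ContinuousMap.subalgebra_topologicalClosure_eq_top_of_separatesPoints _ hsep
  intro g
  rw [← AlgHom.coe_range, ← Subalgebra.topologicalClosure_coe, htop]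
  exact mem_univ g

/-- Multiplication is continuous on `C(K, ℝ)`, so density of the polynomials `p` near `√w` already
puts some `p ^ 2` near `w`. -/
lemma exists_abs_eval_mul_self_sub_lt (hK : IsCompact K) {w : (σ → ℝ) → ℝ} (hw : ContinuousOn w K)
    (hw0 : ∀ x ∈ K, 0 ≤ w x) {ε : ℝ} (hε : 0 < ε) :
    ∃ p : MvPolynomial σ ℝ, ∀ x ∈ K, |MvPolynomial.eval x (p * p) - w x| < ε := by
  have : CompactSpace K := isCompact_iff_compactSpace.mp hK
  let W : C(K, ℝ) := ⟨K.domRestrict w, hw.domRestrict⟩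
  let s : C(K, ℝ) := ⟨fun x => √(W x), W.continuous.sqrt⟩
  have hs : s * s = W := by
    ext x
    exact Real.mul_self_sqrt (hw0 x x.2)
  have hcont : Continuous fun h : C(K, ℝ) => h * h := continuous_id.mul continuous_id
  have hopen : IsOpen {h : C(K, ℝ) | dist (h * h) W < ε} :=
    isOpen_lt (hcont.dist continuous_const) continuous_const
  obtain ⟨p, hp⟩ := (denseRange_evalOn hK).exists_mem_open hopen ⟨s, by simpa [hs] using hε⟩
  refine ⟨p, fun x hx => ?_⟩
  have h := (ContinuousMap.dist_apply_le_dist (⟨x, hx⟩ : K)).trans_lt hp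
  rwa [Real.dist_eq, ← map_mul, evalOn_apply] at h

lemma exists_abs_eval_sub_lt (hK : IsCompact K) {w : (σ → ℝ) → ℝ} (hw : ContinuousOn w K)
    {ε : ℝ} (hε : 0 < ε) :
    ∃ p : MvPolynomial σ ℝ, ∀ x ∈ K, |MvPolynomial.eval x p - w x| < ε := by
  have : CompactSpace K := isCompact_iff_compactSpace.mp hK
  obtain ⟨p, hp⟩ := (denseRange_evalOn hK).exists_dist_lt ⟨K.domRestrict w, hw.domRestrict⟩ hε
  refine ⟨p, fun x hx => ?_⟩
  have h := (ContinuousMap.dist_apply_le_dist (⟨x, hx⟩ : K)).trans_lt hp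
  simpa [Real.dist_eq, evalOn_apply, abs_sub_comm] using h

end PolynomialApproximation

section AlmostEverywhereApproximation

lemma exists_seq_boundedContinuous_tendsto_ae {α : Type*} [TopologicalSpace α] [NormalSpace α]
    [MeasurableSpace α] [BorelSpace α] {μ : Measure α} [μ.WeaklyRegular] {f : α → ℝ}
    (hf : Integrable f μ) :
    ∃ g : ℕ → BoundedContinuousFunction α ℝ,
      ∀ᵐ x ∂μ, Tendsto (fun i => g i x) atTop (𝓝 (f x)) := by
  have hpos (i : ℕ) : ((i : ENNReal)⁻¹) ≠ 0 := ENNReal.inv_ne_zero.mpr (ENNReal.natCast_ne_top i)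
  choose g hg hgL using fun i =>
    (memLp_one_iff_integrable.mpr hf).exists_boundedContinuous_eLpNorm_sub_le
      ENNReal.one_ne_top (hpos i)
  have hL1 : Tendsto (fun i => eLpNorm (⇑(g i) - f) 1 μ) atTop (𝓝 0) :=
    tendsto_of_tendsto_of_tendsto_of_le_of_le tendsto_const_nhds
      ENNReal.tendsto_inv_nat_nhds_zero (fun _ => bot_le)
      fun i => (eLpNorm_sub_comm _ _ _ _).trans_le (hg i)
  obtain ⟨ns, -, hns⟩ := (tendstoInMeasure_of_tendsto_eLpNorm one_ne_zero
    (fun i => (hgL i).aestronglyMeasurable) hf.aestronglyMeasurable hL1).exists_seq_tendsto_ae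
  exact ⟨fun i => g (ns i), hns⟩

variable {σ : Type*} [Countable σ] {K : Set (σ → ℝ)} {μ : Measure (σ → ℝ)} [IsFiniteMeasure μ]

lemma exists_seq_eval_tendsto_ae (hK : IsCompact K) (hμK : ∀ᵐ x ∂μ, x ∈ K) {γ : ℝ} (hγ : 0 ≤ γ)
    {f : (σ → ℝ) → ℝ} (hf : AEMeasurable f μ) (hfγ : ∀ᵐ x ∂μ, f x ∈ Icc 0 γ) :
    ∃ q : ℕ → MvPolynomial σ ℝ,
      (∀ i, ∀ x ∈ K, MvPolynomial.eval x (q i) ∈ Icc 0 (γ + 2)) ∧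
      ∀ᵐ x ∂μ, Tendsto (fun i => MvPolynomial.eval x (q i)) atTop (𝓝 (f x)) := by
  obtain ⟨g, hg⟩ := exists_seq_boundedContinuous_tendsto_ae
    (Integrable.of_mem_Icc 0 γ hf hfγ)
  let c (i : ℕ) (x : σ → ℝ) : ℝ := max 0 (min γ (g i x))
  let δ (i : ℕ) : ℝ := 1 / ((i : ℝ) + 1)
  have hδ (i : ℕ) : 0 < δ i := Nat.one_div_pos_of_nat
  have hδ1 (i : ℕ) : δ i ≤ 1 := by simpa [δ] using Nat.one_div_le_one_div (α := ℝ) (Nat.zero_le i)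
  have hc0 (i x) : 0 ≤ c i x := le_max_left _ _
  have hcγ (i x) : c i x ≤ γ := max_le hγ (min_le_left _ _)
  -- Shifting by `δ i` keeps the `δ i`-approximation of the truncation `c i` nonnegative.
  have hcδ (i : ℕ) : Continuous fun x => c i x + δ i := by
    have := (g i).continuous
    fun_prop
  choose q hq using fun i => exists_abs_eval_sub_lt hK (hcδ i).continuousOn (hδ i)
  refine ⟨q, fun i x hx => ?_, ?_⟩
  · have := abs_lt.mp (hq i x hx)
    constructor <;> linarith [hc0 i x, hcγ i x, hδ1 i]
  filter_upwards [hg, hfγ, hμK] with x hgx hfx hxK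
  have hc : Tendsto (fun i => c i x) atTop (𝓝 (f x)) := by
    simpa only [min_eq_right hfx.2, max_eq_right hfx.1]
      using (tendsto_const_nhds (x := (0 : ℝ))).max ((tendsto_const_nhds (x := γ)).min hgx)
  have hδ0 : Tendsto δ atTop (𝓝 0) := tendsto_one_div_add_atTop_nhds_zero_nat
  refine tendsto_of_tendsto_of_tendsto_of_le_of_le hc
    (by simpa using hc.add (hδ0.const_mul 2)) (fun i => ?_) fun i => ?_ <;>
  · have := abs_lt.mp (hq i x hxK)
    dsimp only
    linarith

end AlmostEverywhereApproximation

section PositiveFunctional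

lemma pow_succ_sub_tangent_eq_sum {R : Type*} [CommRing R] (y q : R) (k : ℕ) :
    y ^ (k + 1) - ((k + 1) * q ^ k * y - k * q ^ (k + 1)) =
      ∑ i ∈ Finset.range k, (i + 1) * q ^ i * (y ^ (k - 1 - i) * (y - q) ^ 2) := by
  induction k with
  | zero => simp
  | succ k ih =>
    have hstep : ∑ i ∈ Finset.range k, (i + 1) * q ^ i * (y ^ (k + 1 - 1 - i) * (y - q) ^ 2) =
        y * ∑ i ∈ Finset.range k, (i + 1) * q ^ i * (y ^ (k - 1 - i) * (y - q) ^ 2) := by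
      rw [Finset.mul_sum]
      refine Finset.sum_congr rfl fun i hi => ?_
      rw [show k + 1 - 1 - i = k - 1 - i + 1 by have := Finset.mem_range.mp hi; lia, pow_succ]
      ring
    rw [Finset.sum_range_succ, hstep, ← ih]
    simp only [Nat.add_sub_cancel, Nat.sub_self, pow_zero, Nat.cast_add, Nat.cast_one]
    ring

variable {P : Type*} [CommRing P] [Algebra ℝ P] {L : P →ₗ[ℝ] ℝ}

lemma sq_apply_mul_le (hL : ∀ p, 0 ≤ L (p * p)) (a b : P) :
    L (a * b) ^ 2 ≤ L (a * a) * L (b * b) := by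
  have h := LinearMap.BilinForm.apply_mul_apply_le_of_forall_zero_le
    ((LinearMap.mul ℝ P).compr₂ L) hL a b
  simpa only [LinearMap.compr₂_apply, LinearMap.mul_apply', mul_comm b a, ← sq] using h

lemma apply_pow_mul_mul_self_nonneg (hL : ∀ p, 0 ≤ L (p * p)) {y : P}
    (hy : ∀ p, 0 ≤ L (y * (p * p))) (j : ℕ) (p : P) : 0 ≤ L (y ^ j * (p * p)) := by
  obtain ⟨i, rfl | rfl⟩ := j.even_or_odd'
  · convert hL (y ^ i * p) using 2
    ring
  · convert hy (y ^ i * p) using 2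
    ring

variable {σ : Type*} {K : Set (σ → ℝ)} {μ : Measure (σ → ℝ)} [IsFiniteMeasure μ]
  {ι : MvPolynomial σ ℝ →ₐ[ℝ] P}

lemma abs_apply_mul_le_of_abs_eval_le (hL : ∀ p, 0 ≤ L (p * p))
    (hμ : ∀ u, L (ι u) = ∫ x, MvPolynomial.eval x u ∂μ) {v : MvPolynomial σ ℝ} {δ : ℝ}
    (hδ : 0 ≤ δ) (hv : ∀ᵐ x ∂μ, |MvPolynomial.eval x v| ≤ δ) (b : P) :
    |L (ι v * b)| ≤ δ * √(μ.real univ * L (b * b)) := by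
  have hint : L (ι v * ι v) ≤ δ ^ 2 * μ.real univ :=
    calc L (ι v * ι v) = ∫ x, MvPolynomial.eval x v ^ 2 ∂μ := by
          rw [← map_mul, hμ]
          simp only [map_mul, sq]
      _ ≤ ∫ _, δ ^ 2 ∂μ := by
          refine integral_mono_of_nonneg (ae_of_all _ fun x => sq_nonneg _) (integrable_const _) ?_
          filter_upwards [hv] with x hx using sq_le_sq' (abs_le.mp hx).1 (abs_le.mp hx).2
      _ = δ ^ 2 * μ.real univ := by rw [integral_const, smul_eq_mul, mul_comm]
  have hsq : L (ι v * b) ^ 2 ≤ δ ^ 2 * (μ.real univ * L (b * b)) :=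
    calc L (ι v * b) ^ 2 ≤ L (ι v * ι v) * L (b * b) := sq_apply_mul_le hL _ _
      _ ≤ δ ^ 2 * μ.real univ * L (b * b) := mul_le_mul_of_nonneg_right hint (hL b)
      _ = δ ^ 2 * (μ.real univ * L (b * b)) := mul_assoc _ _ _
  calc |L (ι v * b)| ≤ √(δ ^ 2 * (μ.real univ * L (b * b))) := Real.abs_le_sqrt hsq
    _ = δ * √(μ.real univ * L (b * b)) := by rw [Real.sqrt_mul (sq_nonneg δ), Real.sqrt_sq hδ]

/-- By Cauchy–Schwarz, squares of polynomials uniformly close to `w` on `K` cannot tell `w` from a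
sum of squares. -/
lemma apply_mul_nonneg_of_eval_nonneg (hK : IsCompact K) (hμK : ∀ᵐ x ∂μ, x ∈ K)
    (hL : ∀ p, 0 ≤ L (p * p)) (hμ : ∀ u, L (ι u) = ∫ x, MvPolynomial.eval x u ∂μ) {b : P}
    (hb : ∀ p, 0 ≤ L (ι (p * p) * b)) {w : MvPolynomial σ ℝ}
    (hw : ∀ x ∈ K, 0 ≤ MvPolynomial.eval x w) : 0 ≤ L (ι w * b) := by
  refine le_of_forall_pos_le_add fun ε hε => ?_
  set c : ℝ := √(μ.real univ * L (b * b))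
  have hc : 0 < c + 1 := add_pos_of_nonneg_of_pos (Real.sqrt_nonneg _) one_pos
  have hδ : 0 < ε / (c + 1) := div_pos hε hc
  obtain ⟨p, hp⟩ := exists_abs_eval_mul_self_sub_lt hK
    (MvPolynomial.continuous_eval w).continuousOn hw hδ
  have hclose : |L (ι (p * p - w) * b)| ≤ ε / (c + 1) * c := by
    refine abs_apply_mul_le_of_abs_eval_le hL hμ hδ.le ?_ b
    filter_upwards [hμK] with x hx
    simpa only [map_sub] using (hp x hx).le
  have hle : ε / (c + 1) * c ≤ ε := by
    rw [div_mul_eq_mul_div, div_le_iff₀ hc]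
    linarith
  rw [map_sub, sub_mul, map_sub] at hclose
  linarith [(abs_le.mp hclose).2, hb p]

variable {y : P}

lemma apply_mul_tangent_nonneg (hK : IsCompact K) (hμK : ∀ᵐ x ∂μ, x ∈ K)
    (hL : ∀ p, 0 ≤ L (p * p)) (hy : ∀ p, 0 ≤ L (y * (p * p)))
    (hμ : ∀ u, L (ι u) = ∫ x, MvPolynomial.eval x u ∂μ) {w q : MvPolynomial σ ℝ}
    (hw : ∀ x ∈ K, 0 ≤ MvPolynomial.eval x w) (hq : ∀ x ∈ K, 0 ≤ MvPolynomial.eval x q) (k : ℕ) :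
    0 ≤ L (ι w * (y ^ (k + 1) - ((k + 1) * ι q ^ k * y - k * ι q ^ (k + 1)))) := by
  rw [pow_succ_sub_tangent_eq_sum, Finset.mul_sum, map_sum]
  refine Finset.sum_nonneg fun i _ => ?_
  have hterm : 0 ≤ L (ι (w * ((i + 1) * q ^ i)) * (y ^ (k - 1 - i) * (y - ι q) ^ 2)) := by
    refine apply_mul_nonneg_of_eval_nonneg hK hμK hL hμ (fun p => ?_) fun x hx => ?_
    · convert apply_pow_mul_mul_self_nonneg hL hy (k - 1 - i) (ι p * (y - ι q)) using 2
      rw [map_mul]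
      ring
    · have := hw x hx
      have := hq x hx
      simp only [map_mul, map_add, map_natCast, map_one, map_pow]
      positivity
  simpa only [map_mul, map_add, map_natCast, map_one, map_pow, mul_assoc] using hterm

end PositiveFunctional

section LowerBound

variable {σ : Type*} [Countable σ] {K : Set (σ → ℝ)} {μ : Measure (σ → ℝ)} {f : (σ → ℝ) → ℝ}

lemma integrable_eval_mul (hK : IsCompact K) (hμK : ∀ᵐ x ∂μ, x ∈ K) (hf : Integrable f μ)
    (u : MvPolynomial σ ℝ) : Integrable (fun x => MvPolynomial.eval x u * f x) μ := by
  have hu := MvPolynomial.continuous_eval u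
  obtain ⟨C, hC⟩ := hK.exists_bound_of_continuousOn hu.continuousOn
  exact hf.bdd_mul hu.aestronglyMeasurable (hμK.mono hC)

variable [IsFiniteMeasure μ]

lemma tendsto_integral_mul_tangent (hK : IsCompact K) (hμK : ∀ᵐ x ∂μ, x ∈ K) {γ : ℝ}
    (hf : AEMeasurable f μ) (hfγ : ∀ᵐ x ∂μ, f x ∈ Icc 0 γ) {B : ℝ} {w : (σ → ℝ) → ℝ}
    (hw : Continuous w) {q : ℕ → (σ → ℝ) → ℝ} (hqc : ∀ i, Continuous (q i))
    (hqB : ∀ i, ∀ x ∈ K, q i x ∈ Icc 0 B)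
    (hqf : ∀ᵐ x ∂μ, Tendsto (fun i => q i x) atTop (𝓝 (f x))) (k : ℕ) :
    Tendsto (fun i => ∫ x, w x * ((k + 1) * q i x ^ k * f x - k * q i x ^ (k + 1)) ∂μ) atTop
      (𝓝 (∫ x, w x * f x ^ (k + 1) ∂μ)) := by
  let F (z : (σ → ℝ) × ℝ × ℝ) : ℝ := w z.1 * ((k + 1) * z.2.1 ^ k * z.2.2 - k * z.2.1 ^ (k + 1))
  have hF : Continuous F := by fun_prop
  obtain ⟨C, hC⟩ := (hK.prod (isCompact_Icc.prod isCompact_Icc)).exists_bound_of_continuousOn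
    (s := K ×ˢ Icc 0 B ×ˢ Icc 0 γ) hF.continuousOn
  refine tendsto_integral_of_dominated_convergence (fun _ => C) (fun i => ?_) (integrable_const C)
    (fun i => ?_) ?_
  · have hqi : AEMeasurable (q i) μ := (hqc i).aemeasurable
    exact (hF.measurable.comp_aemeasurable
      (aemeasurable_id.prodMk (hqi.prodMk hf))).aestronglyMeasurable
  · filter_upwards [hμK, hfγ] with x hx hfx
    exact hC (x, q i x, f x) ⟨hx, hqB i x hx, hfx⟩
  · filter_upwards [hqf] with x hx
    have h := (hF.tendsto (x, f x, f x)).comp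
      (tendsto_const_nhds.prodMk_nhds (hx.prodMk_nhds tendsto_const_nhds))
    have hFf : F (x, f x, f x) = w x * f x ^ (k + 1) := by
      simp only [F]
      ring
    rwa [hFf] at h

variable {P : Type*} [CommRing P] [Algebra ℝ P] {L : P →ₗ[ℝ] ℝ}
  {ι : MvPolynomial σ ℝ →ₐ[ℝ] P} {y : P}

/-- The tangent lines of `s ↦ s ^ (k + 1)` at polynomial approximations of `f` involve only the
moments `L (ι u)` and `L (ι u * y)`, which are those of the graph of `f`. -/
lemma integral_eval_mul_pow_le_apply (hK : IsCompact K) (hμK : ∀ᵐ x ∂μ, x ∈ K) {γ : ℝ}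
    (hγ : 0 ≤ γ) (hf : AEMeasurable f μ) (hfγ : ∀ᵐ x ∂μ, f x ∈ Icc 0 γ)
    (hL : ∀ p, 0 ≤ L (p * p)) (hy : ∀ p, 0 ≤ L (y * (p * p)))
    (hμ : ∀ u, L (ι u) = ∫ x, MvPolynomial.eval x u ∂μ)
    (hμf : ∀ u, L (ι u * y) = ∫ x, MvPolynomial.eval x u * f x ∂μ) {w : MvPolynomial σ ℝ}
    (hw : ∀ x ∈ K, 0 ≤ MvPolynomial.eval x w) (k : ℕ) :
    ∫ x, MvPolynomial.eval x w * f x ^ (k + 1) ∂μ ≤ L (ι w * y ^ (k + 1)) := by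
  obtain ⟨q, hqB, hqf⟩ := exists_seq_eval_tendsto_ae hK hμK hγ hf hfγ
  have hlim := tendsto_integral_mul_tangent hK hμK hf hfγ (MvPolynomial.continuous_eval w)
    (fun i => MvPolynomial.continuous_eval (q i)) hqB hqf k
  refine le_of_tendsto' hlim fun i => ?_
  have htangent := apply_mul_tangent_nonneg hK hμK hL hy hμ hw (fun x hx => (hqB i x hx).1) k
  have hsplit : ι w * (y ^ (k + 1) - ((k + 1) * ι (q i) ^ k * y - k * ι (q i) ^ (k + 1))) =
      ι w * y ^ (k + 1) - (ι (w * ((k + 1) * q i ^ k)) * y - ι (w * (k * q i ^ (k + 1)))) := by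
    simp only [map_mul, map_add, map_natCast, map_one, map_pow]
    ring
  have hint (u : MvPolynomial σ ℝ) : Integrable (fun x => MvPolynomial.eval x u) μ := by
    simpa only [mul_one] using integrable_eval_mul hK hμK (integrable_const 1) u
  have hintf := integrable_eval_mul hK hμK (Integrable.of_mem_Icc 0 γ hf hfγ)
  rw [hsplit, map_sub, map_sub, hμ, hμf, ← integral_sub (hintf _) (hint _), sub_nonneg] at htangent
  refine (integral_congr_ae (ae_of_all _ fun x => ?_)).trans_le htangent
  simp only [map_mul, map_add, map_natCast, map_one, map_pow]
  ring

end LowerBound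

section RieszFunctional

variable {M : Type*}

/-- The linear functional on the algebra of polynomials with exponents in `M` that sends the
monomial of exponent `d` to `φ d`. -/
def rieszFunctional (φ : M → ℝ) : AddMonoidAlgebra ℝ M →ₗ[ℝ] ℝ :=
  Finsupp.linearCombination ℝ φ ∘ₗ (AddMonoidAlgebra.coeffLinearEquiv ℝ).toLinearMap

lemma rieszFunctional_single (φ : M → ℝ) (d : M) (c : ℝ) :
    rieszFunctional φ (AddMonoidAlgebra.single d c) = c * φ d := by
  simp [rieszFunctional]

lemma tendsto_rieszFunctional {α : Type*} {F : Filter α} {φ : α → M → ℝ} {l : M → ℝ}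
    (h : ∀ d, Tendsto (fun r => φ r d) F (𝓝 (l d))) (p : AddMonoidAlgebra ℝ M) :
    Tendsto (fun r => rieszFunctional (φ r) p) F (𝓝 (rieszFunctional l p)) := by
  induction p using AddMonoidAlgebra.induction_linear with
  | zero => simpa only [map_zero] using tendsto_const_nhds
  | add p q hp hq => simpa only [map_add] using hp.add hq
  | single d c => simpa only [rieszFunctional_single] using (h d).const_mul c

variable [AddCommMonoid M]

/-- The block indexed by `s` of the localizing matrix of `φ` with respect to the polynomial `h`. -/
def localizingMatrix (φ : M → ℝ) (h : AddMonoidAlgebra ℝ M) (s : Finset M) : Matrix s s ℝ :=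
  fun a b => rieszFunctional φ (h * AddMonoidAlgebra.single (a + b : M) 1)

lemma dotProduct_localizingMatrix_mulVec (φ : M → ℝ) (h : AddMonoidAlgebra ℝ M) (s : Finset M)
    (c : s → ℝ) :
    c ⬝ᵥ (localizingMatrix φ h s).mulVec c = rieszFunctional φ
      (h * ((∑ a : s, AddMonoidAlgebra.single (a : M) (c a)) *
        ∑ a : s, AddMonoidAlgebra.single (a : M) (c a))) := by
  have hmul (a b : s) :
      AddMonoidAlgebra.single (a : M) (c a) * AddMonoidAlgebra.single (b : M) (c b) =
        (c a * c b) • AddMonoidAlgebra.single (a + b : M) (1 : ℝ) := by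
    rw [AddMonoidAlgebra.single_mul_single, AddMonoidAlgebra.smul_single, smul_eq_mul, mul_one]
  rw [Finset.sum_mul_sum]
  simp only [hmul, Finset.mul_sum, mul_smul_comm, map_sum, map_smul, smul_eq_mul, dotProduct,
    Matrix.mulVec, localizingMatrix]
  exact Finset.sum_congr rfl fun a _ => Finset.sum_congr rfl fun b _ => by ring

lemma rieszFunctional_mul_mul_self_nonneg {φ : M → ℝ} {h : AddMonoidAlgebra ℝ M} {s : Finset M}
    (hs : (localizingMatrix φ h s).PosSemidef) {p : AddMonoidAlgebra ℝ M}
    (hp : p.coeff.support ⊆ s) : 0 ≤ rieszFunctional φ (h * (p * p)) := by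
  have hsum : ∑ a : s, AddMonoidAlgebra.single (a : M) (p.coeff a) = p := by
    rw [Finset.sum_coe_sort s fun a => AddMonoidAlgebra.single a (p.coeff a),
      ← Finsupp.sum_of_support_subset p.coeff hp _ fun a _ => AddMonoidAlgebra.single_zero a,
      AddMonoidAlgebra.sum_coeff_single]
  have hquad := dotProduct_localizingMatrix_mulVec φ h s fun a => p.coeff a
  rw [hsum] at hquad
  simpa only [star_trivial, hquad] using hs.dotProduct_mulVec_nonneg fun a => p.coeff a

lemma posSemidef_localizingMatrix {φ : M → ℝ} {h : AddMonoidAlgebra ℝ M}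
    (hφ : ∀ p, 0 ≤ rieszFunctional φ (h * (p * p))) (s : Finset M) :
    (localizingMatrix φ h s).PosSemidef := by
  refine Matrix.PosSemidef.of_dotProduct_mulVec_nonneg (Matrix.ext fun a b => ?_) fun c => ?_
  · simp only [Matrix.conjTranspose_apply, star_trivial, localizingMatrix, add_comm]
  · rw [star_trivial, dotProduct_localizingMatrix_mulVec]
    exact hφ _

lemma sq_apply_add_le {φ : M → ℝ} {s : Finset M} (hs : (localizingMatrix φ 1 s).PosSemidef)
    {a b : M} (ha : a ∈ s) (hb : b ∈ s) : φ (a + b) ^ 2 ≤ φ (a + a) * φ (b + b) := by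
  have hdet := (hs.submatrix ![⟨a, ha⟩, ⟨b, hb⟩]).det_nonneg
  simp only [Matrix.det_fin_two, Matrix.submatrix_apply, localizingMatrix, one_mul,
    rieszFunctional_single, Matrix.cons_val_zero, Matrix.cons_val_one, add_comm b a] at hdet
  linarith

end RieszFunctional

section GraphMoments

variable {n : ℕ}

lemma mem_idx {r : ℕ} {d : (Fin n → ℕ) × ℕ} : d ∈ idx n r ↔ ∑ i, d.1 i + d.2 ≤ r := by
  simp only [idx, Finset.mem_filter, Finset.mem_product, Fintype.mem_piFinset, Finset.mem_range,
    and_iff_right_iff_imp]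
  intro h
  refine ⟨fun i => ?_, by lia⟩
  have := Finset.single_le_sum_of_canonicallyOrdered (f := d.1) (Finset.mem_univ i)
  lia

/-- Real polynomials in `x₁, …, xₙ` and `y`, with exponents encoded as in `idx`. -/
abbrev PolyXY (n : ℕ) : Type := AddMonoidAlgebra ℝ ((Fin n → ℕ) × ℕ)

/-- The variable `y`. -/
def varY : PolyXY n := AddMonoidAlgebra.single (0, 1) 1

/-- The inclusion of polynomials in `x` into polynomials in `x` and `y`. -/
def ofX : MvPolynomial (Fin n) ℝ →ₐ[ℝ] PolyXY n :=
  AddMonoidAlgebra.mapDomainAlgHom ℝ ℝ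
    { toFun := fun e : Fin n →₀ ℕ => (⇑e, 0), map_zero' := rfl, map_add' := fun _ _ => rfl }

/-- The polynomial in `x` of degree at most `r` with coefficients `c`, as in `polyEval`. -/
def polyOfCoeff (r : ℕ) (c : (Fin n → ℕ) → ℝ) : PolyXY n :=
  ∑ e ∈ xIdx n r, AddMonoidAlgebra.single (e, 0) (c e)

/-- Evaluation at the point `(x, y)`. -/
def evalXY (x : Fin n → ℝ) (y : ℝ) : PolyXY n →ₐ[ℝ] ℝ :=
  AddMonoidAlgebra.lift ℝ ℝ _
    { toFun := fun d => (∏ i, x i ^ d.toAdd.1 i) * y ^ d.toAdd.2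
      map_one' := by simp
      map_mul' := fun a b => by
        simp only [toAdd_mul, Prod.fst_add, Prod.snd_add, Pi.add_apply, pow_add,
          Finset.prod_mul_distrib]
        ring }

lemma varY_pow (k : ℕ) : (varY : PolyXY n) ^ k = AddMonoidAlgebra.single (0, k) 1 := by
  simp [varY, AddMonoidAlgebra.single_pow]

lemma ofX_monomial (e : Fin n →₀ ℕ) (c : ℝ) :
    ofX (MvPolynomial.monomial e c) = AddMonoidAlgebra.single (⇑e, 0) c :=
  AddMonoidAlgebra.mapDomain_single

lemma ofX_monomial_mul_varY_pow (e : Fin n →₀ ℕ) (c : ℝ) (k : ℕ) :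
    ofX (MvPolynomial.monomial e c) * varY ^ k = AddMonoidAlgebra.single (⇑e, k) c := by
  simp [ofX_monomial, varY_pow, AddMonoidAlgebra.single_mul_single]

lemma evalXY_single (x : Fin n → ℝ) (y : ℝ) (d : (Fin n → ℕ) × ℕ) (c : ℝ) :
    evalXY x y (AddMonoidAlgebra.single d c) = c * ((∏ i, x i ^ d.1 i) * y ^ d.2) := by
  simp [evalXY, AddMonoidAlgebra.lift_single]

lemma evalXY_varY (x : Fin n → ℝ) (y : ℝ) : evalXY x y varY = y := by
  simp [varY, evalXY_single]

lemma evalXY_ofX (x : Fin n → ℝ) (y : ℝ) (u : MvPolynomial (Fin n) ℝ) :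
    evalXY x y (ofX u) = MvPolynomial.eval x u := by
  induction u using MvPolynomial.induction_on' with
  | monomial e c => simp [ofX_monomial, evalXY_single, MvPolynomial.eval_monomial,
      Finsupp.prod_fintype]
  | add p q hp hq => simp only [map_add, hp, hq]

lemma evalXY_polyOfCoeff (x : Fin n → ℝ) (y : ℝ) (r : ℕ) (c : (Fin n → ℕ) → ℝ) :
    evalXY x y (polyOfCoeff r c) = polyEval n r c x := by
  simp [polyOfCoeff, polyEval, evalXY_single]

variable (φ : (Fin n → ℕ) × ℕ → ℝ)

lemma momMat_eq_localizingMatrix (r : ℕ) : momMat n r φ = localizingMatrix φ 1 (idx n r) := by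
  ext a b
  rw [localizingMatrix, one_mul, rieszFunctional_single, one_mul]
  rfl

lemma locMatX_eq_localizingMatrix (c : (Fin n → ℕ) → ℝ) (t r : ℕ) :
    locMatX n c t r φ = localizingMatrix φ (polyOfCoeff (2 * t) c) (idx n (r - t)) := by
  ext a b
  simp only [locMatX, localizingMatrix, polyOfCoeff, Finset.sum_mul, map_sum,
    AddMonoidAlgebra.single_mul_single, rieszFunctional_single, mul_one]
  refine Finset.sum_congr rfl fun e _ => congrArg (c e * φ ·) ?_
  ext <;> simp [add_assoc]

lemma locMatY_eq_localizingMatrix (γ : ℝ) (r : ℕ) :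
    locMatY n γ r φ = localizingMatrix φ (γ • varY - varY ^ 2) (idx n (r - 1)) := by
  ext a b
  rw [localizingMatrix, sub_mul, smul_mul_assoc, map_sub, map_smul, varY_pow, varY,
    AddMonoidAlgebra.single_mul_single, AddMonoidAlgebra.single_mul_single, rieszFunctional_single,
    rieszFunctional_single, add_comm (0, 1), add_comm (0, 2), one_mul, one_mul, one_mul,
    smul_eq_mul]
  rfl

/-- The moments of the image of `lam` under `x ↦ (x, f x)`. -/
def graphMoment (lam : Measure (Fin n → ℝ)) (f : (Fin n → ℝ) → ℝ) (d : (Fin n → ℕ) × ℕ) : ℝ :=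
  ∫ x, (∏ i, x i ^ d.1 i) * f x ^ d.2 ∂lam

lemma monomial_mem_Icc {x : Fin n → ℝ} (hx : x ∈ Icc 0 1) {y γ : ℝ} (hy : y ∈ Icc 0 γ)
    (d : (Fin n → ℕ) × ℕ) : (∏ i, x i ^ d.1 i) * y ^ d.2 ∈ Icc 0 (γ ^ d.2) := by
  have h0 : 0 ≤ ∏ i, x i ^ d.1 i := Finset.prod_nonneg fun i _ => pow_nonneg (hx.1 i) _
  have h1 : ∏ i, x i ^ d.1 i ≤ 1 :=
    Finset.prod_le_one (fun i _ => pow_nonneg (hx.1 i) _) fun i _ => pow_le_one₀ (hx.1 i) (hx.2 i)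
  refine ⟨mul_nonneg h0 (pow_nonneg hy.1 _), ?_⟩
  calc (∏ i, x i ^ d.1 i) * y ^ d.2 ≤ 1 * y ^ d.2 :=
        mul_le_mul_of_nonneg_right h1 (pow_nonneg hy.1 _)
    _ = y ^ d.2 := one_mul _
    _ ≤ γ ^ d.2 := pow_le_pow_left₀ hy.1 hy.2 _

variable {lam : Measure (Fin n → ℝ)} {f : (Fin n → ℝ) → ℝ} {γ : ℝ}
  (hlam : ∀ᵐ x ∂lam, x ∈ Icc 0 1) (hf : AEMeasurable f lam) (hfγ : ∀ᵐ x ∂lam, f x ∈ Icc 0 γ)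

include hlam hfγ

lemma ae_monomial_mem_Icc (d : (Fin n → ℕ) × ℕ) :
    ∀ᵐ x ∂lam, (∏ i, x i ^ d.1 i) * f x ^ d.2 ∈ Icc 0 (γ ^ d.2) := by
  filter_upwards [hlam, hfγ] with x hx hfx using monomial_mem_Icc hx hfx d

lemma graphMoment_nonneg (d : (Fin n → ℕ) × ℕ) : 0 ≤ graphMoment lam f d :=
  integral_nonneg_of_ae ((ae_monomial_mem_Icc hlam hfγ d).mono fun _ hx => hx.1)

lemma graphMoment_le_pow [IsProbabilityMeasure lam] (d : (Fin n → ℕ) × ℕ) :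
    graphMoment lam f d ≤ γ ^ d.2 := by
  have h := ae_monomial_mem_Icc hlam hfγ d
  calc graphMoment lam f d ≤ ∫ _, γ ^ d.2 ∂lam :=
        integral_mono_of_nonneg (h.mono fun _ hx => hx.1) (integrable_const _)
          (h.mono fun _ hx => hx.2)
    _ = γ ^ d.2 := by simp

variable [IsFiniteMeasure lam]

include hf

lemma integrable_evalXY (p : PolyXY n) : Integrable (fun x => evalXY x (f x) p) lam := by
  induction p using AddMonoidAlgebra.induction_linear with
  | zero => simp
  | add p q hp hq =>
    simp only [map_add]
    exact hp.add hq
  | single d c =>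
    have hx : Measurable fun x : Fin n → ℝ => ∏ i, x i ^ d.1 i := by fun_prop
    have hmeas : AEMeasurable (fun x => (∏ i, x i ^ d.1 i) * f x ^ d.2) lam :=
      hx.aemeasurable.mul (hf.pow_const d.2)
    simpa only [evalXY_single] using
      (Integrable.of_mem_Icc _ _ hmeas (ae_monomial_mem_Icc hlam hfγ d)).const_mul c

lemma rieszFunctional_graphMoment (p : PolyXY n) :
    rieszFunctional (graphMoment lam f) p = ∫ x, evalXY x (f x) p ∂lam := by
  induction p using AddMonoidAlgebra.induction_linear with
  | zero => simp
  | add p q hp hq =>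
    simp only [map_add, hp, hq]
    exact (integral_add (integrable_evalXY hlam hf hfγ p) (integrable_evalXY hlam hf hfγ q)).symm
  | single d c => simp only [rieszFunctional_single, evalXY_single, graphMoment, integral_const_mul]

lemma posSemidef_localizingMatrix_graphMoment {h : PolyXY n}
    (hh : ∀ᵐ x ∂lam, 0 ≤ evalXY x (f x) h) (s : Finset ((Fin n → ℕ) × ℕ)) :
    (localizingMatrix (graphMoment lam f) h s).PosSemidef := by
  refine posSemidef_localizingMatrix (fun p => ?_) s
  rw [rieszFunctional_graphMoment hlam hf hfγ]
  refine integral_nonneg_of_ae ?_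
  filter_upwards [hh] with x hx
  rw [map_mul, map_mul]
  exact mul_nonneg hx (mul_self_nonneg _)

lemma feasible_graphMoment {m : ℕ} {g : Fin m → (Fin n → ℕ) → ℝ} {t : Fin m → ℕ}
    (hg : ∀ j, ∀ᵐ x ∂lam, 0 ≤ polyEval n (2 * t j) (g j) x) (r : ℕ) :
    Feasible n m γ g t (graphMoment lam f) r (graphMoment lam f) := by
  refine ⟨?_, fun j => ?_, ?_, fun _ _ _ => rfl⟩
  · rw [momMat_eq_localizingMatrix]
    exact posSemidef_localizingMatrix_graphMoment hlam hf hfγ (by simp) _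
  · rw [locMatX_eq_localizingMatrix]
    refine posSemidef_localizingMatrix_graphMoment hlam hf hfγ ?_ _
    simpa only [evalXY_polyOfCoeff] using hg j
  · rw [locMatY_eq_localizingMatrix]
    refine posSemidef_localizingMatrix_graphMoment hlam hf hfγ ?_ _
    filter_upwards [hfγ] with x hx
    rw [map_sub, map_smul, map_pow, evalXY_varY, smul_eq_mul, sq, ← sub_mul]
    exact mul_nonneg (sub_nonneg.mpr hx.2) hx.1

omit hlam hf hfγ in
lemma rieszFunctional_ofX_mul_varY_pow_congr {φ ψ : (Fin n → ℕ) × ℕ → ℝ} {k : ℕ}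
    (h : ∀ α, φ (α, k) = ψ (α, k)) (u : MvPolynomial (Fin n) ℝ) :
    rieszFunctional φ (ofX u * varY ^ k) = rieszFunctional ψ (ofX u * varY ^ k) := by
  induction u using MvPolynomial.induction_on' with
  | monomial e c => simp only [ofX_monomial_mul_varY_pow, rieszFunctional_single, h]
  | add p q hp hq => simp only [map_add, add_mul, hp, hq]

lemma rieszFunctional_ofX_mul_varY_pow {φ : (Fin n → ℕ) × ℕ → ℝ} {k : ℕ}
    (h : ∀ α, φ (α, k) = graphMoment lam f (α, k)) (u : MvPolynomial (Fin n) ℝ) :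
    rieszFunctional φ (ofX u * varY ^ k) = ∫ x, MvPolynomial.eval x u * f x ^ k ∂lam := by
  rw [rieszFunctional_ofX_mul_varY_pow_congr h, rieszFunctional_graphMoment hlam hf hfγ]
  simp only [map_mul, map_pow, evalXY_ofX, evalXY_varY]

lemma graphMoment_le (hγ : 0 < γ) {φ : (Fin n → ℕ) × ℕ → ℝ}
    (hsq : ∀ p, 0 ≤ rieszFunctional φ (p * p))
    (hloc : ∀ p, 0 ≤ rieszFunctional φ ((γ • varY - varY ^ 2) * (p * p)))
    (hφ : ∀ d : (Fin n → ℕ) × ℕ, d.2 ≤ 1 → φ d = graphMoment lam f d) (d : (Fin n → ℕ) × ℕ) :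
    graphMoment lam f d ≤ φ d := by
  have hY (p : PolyXY n) : 0 ≤ rieszFunctional φ (varY * (p * p)) := by
    have hYY := hsq (varY * p)
    have hp := hloc p
    rw [sub_mul, smul_mul_assoc, map_sub, map_smul, smul_eq_mul,
      show varY ^ 2 * (p * p) = varY * p * (varY * p) by ring] at hp
    exact nonneg_of_mul_nonneg_right (by linarith) hγ
  have hmom {k : ℕ} (hk : k ≤ 1) (u : MvPolynomial (Fin n) ℝ) :
      rieszFunctional φ (ofX u * varY ^ k) = ∫ x, MvPolynomial.eval x u * f x ^ k ∂lam :=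
    rieszFunctional_ofX_mul_varY_pow hlam hf hfγ (fun α => hφ (α, k) hk) u
  obtain ⟨α, _ | k⟩ := d
  · exact (hφ _ zero_le_one).ge
  set w : MvPolynomial (Fin n) ℝ := MvPolynomial.monomial (Finsupp.equivFunOnFinite.symm α) 1
  have hw (x : Fin n → ℝ) : MvPolynomial.eval x w = ∏ i, x i ^ α i := by
    simp [w, MvPolynomial.eval_monomial, Finsupp.prod_fintype]
  have h := integral_eval_mul_pow_le_apply (w := w) (y := varY) isCompact_Icc hlam hγ.le hf hfγ
    hsq hY (by simpa using hmom zero_le_one) (by simpa using hmom le_rfl)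
    (fun x hx => by rw [hw]; exact Finset.prod_nonneg fun i _ => pow_nonneg (hx.1 i) _) k
  rw [ofX_monomial_mul_varY_pow, rieszFunctional_single, one_mul] at h
  simp only [hw] at h
  exact h

end GraphMoments

section FeasibleBounds

variable {n : ℕ}

lemma exists_add_eq_of_mem_idx_add {r s : ℕ} {d : (Fin n → ℕ) × ℕ} (hd : d ∈ idx n (r + s)) :
    ∃ a ∈ idx n r, ∃ b ∈ idx n s, a + b = d := by
  obtain ⟨α, k⟩ := d
  obtain ⟨β, hβα, hβ⟩ := Finsupp.exists_le_degree_eq (Finsupp.equivFunOnFinite.symm α)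
    (n := min (∑ i, α i) r) (by simp [Finsupp.degree_eq_sum])
  rw [Finsupp.degree_eq_sum] at hβ
  obtain ⟨δ, rfl⟩ : ∃ δ, α = ⇑β + δ :=
    ⟨α - β, (add_tsub_cancel_of_le (show ⇑β ≤ α from hβα)).symm⟩
  rw [mem_idx] at hd
  simp only [Pi.add_apply, Finset.sum_add_distrib] at hd hβ
  refine ⟨(β, min k (r - ∑ i, β i)), mem_idx.mpr ?_,
    (δ, k - min k (r - ∑ i, β i)), mem_idx.mpr ?_, Prod.ext rfl ?_⟩ <;>
    dsimp only [Prod.snd_add] <;> lia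

lemma le_sq_mul_of_le_mul_of_sq_le {a b c γ : ℝ} (ha : 0 ≤ a) (hc : 0 ≤ c) (hab : a ≤ γ * b)
    (hb : b ^ 2 ≤ a * c) : a ≤ γ ^ 2 * c := by
  rcases ha.eq_or_lt with rfl | ha
  · positivity
  refine le_of_mul_le_mul_left ?_ ha
  calc a * a = a ^ 2 := (sq a).symm
    _ ≤ (γ * b) ^ 2 := pow_le_pow_left₀ ha.le hab 2
    _ = γ ^ 2 * b ^ 2 := mul_pow γ b 2
    _ ≤ γ ^ 2 * (a * c) := mul_le_mul_of_nonneg_left hb (sq_nonneg γ)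
    _ = a * (γ ^ 2 * c) := by ring

variable {γ : ℝ} {r : ℕ} {φ : (Fin n → ℕ) × ℕ → ℝ} (hM : (momMat n r φ).PosSemidef)

include hM

lemma apply_add_self_nonneg {a : (Fin n → ℕ) × ℕ} (ha : a ∈ idx n r) : 0 ≤ φ (a + a) :=
  hM.diag_nonneg (i := ⟨a, ha⟩)

variable (hY : (locMatY n γ r φ).PosSemidef) (hone : ∀ α, (α, 0) ∈ idx n (2 * r) → φ (α, 0) ≤ 1)

include hY hone

lemma apply_add_self_le_pow {α : Fin n → ℕ} {k : ℕ} (hk : (α, k) ∈ idx n r) :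
    φ ((α, k) + (α, k)) ≤ (γ ^ k) ^ 2 := by
  induction k with
  | zero =>
    rw [mem_idx] at hk
    simp only [pow_zero, one_pow]
    refine hone (α + α) (mem_idx.mpr ?_)
    simp only [Pi.add_apply, Finset.sum_add_distrib]
    lia
  | succ k ih =>
    have hk' : (α, k) ∈ idx n r := mem_idx.mpr (by rw [mem_idx] at hk; lia)
    have hk'' : (α, k) ∈ idx n (r - 1) := mem_idx.mpr (by rw [mem_idx] at hk; lia)
    have hdet := sq_apply_add_le (momMat_eq_localizingMatrix φ r ▸ hM) hk' hk
    have hloc : φ ((α, k + 1) + (α, k + 1)) ≤ γ * φ ((α, k) + (α, k + 1)) := by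
      have h := sub_nonneg.mp (hY.diag_nonneg (i := ⟨(α, k), hk''⟩))
      rwa [show k + k + 2 = k + 1 + (k + 1) by ring] at h
    calc φ ((α, k + 1) + (α, k + 1)) ≤ γ ^ 2 * φ ((α, k) + (α, k)) :=
          le_sq_mul_of_le_mul_of_sq_le (apply_add_self_nonneg hM hk) (apply_add_self_nonneg hM hk')
            hloc (by rwa [mul_comm])
      _ ≤ γ ^ 2 * (γ ^ k) ^ 2 := mul_le_mul_of_nonneg_left (ih hk') (sq_nonneg γ)
      _ = (γ ^ (k + 1)) ^ 2 := by ring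

lemma abs_apply_le_pow (hγ : 0 ≤ γ) {d : (Fin n → ℕ) × ℕ} (hd : d ∈ idx n (2 * r)) :
    |φ d| ≤ γ ^ d.2 := by
  rw [two_mul] at hd
  obtain ⟨a, ha, b, hb, rfl⟩ := exists_add_eq_of_mem_idx_add hd
  refine abs_le_of_sq_le_sq ?_ (pow_nonneg hγ _)
  calc φ (a + b) ^ 2 ≤ φ (a + a) * φ (b + b) :=
        sq_apply_add_le (momMat_eq_localizingMatrix φ r ▸ hM) ha hb
    _ ≤ (γ ^ a.2) ^ 2 * (γ ^ b.2) ^ 2 :=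
        mul_le_mul (apply_add_self_le_pow hM hY hone ha) (apply_add_self_le_pow hM hY hone hb)
          (apply_add_self_nonneg hM hb) (sq_nonneg _)
    _ = (γ ^ (a + b).2) ^ 2 := by rw [Prod.snd_add, pow_add, mul_pow]

end FeasibleBounds

section OneSidedConvergence

variable {α ι : Type*} {F : Filter α} {u : α → ι → ℝ} {a b : ι → ℝ}

lemma tendsto_posPart_sub_of_le_ultrafilter_limits (hub : ∀ i, ∀ᶠ r in F, |u r i| ≤ b i)
    (hle : ∀ (U : Ultrafilter α) (l : ι → ℝ), ↑U ≤ F →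
      (∀ i, Tendsto (fun r => u r i) U (𝓝 (l i))) → a ≤ l) (i : ι) :
    Tendsto (fun r => (a i - u r i)⁺) F (𝓝 0) := by
  rw [tendsto_iff_ultrafilter]
  intro U hU
  have hlim (j : ι) : ∃ l, Tendsto (fun r => u r j) U (𝓝 l) := by
    have hmem : ∀ᶠ r in U, u r j ∈ Icc (-b j) (b j) := by
      filter_upwards [hU (hub j)] with r hr using abs_le.mp hr
    obtain ⟨l, -, hl⟩ := isCompact_Icc.ultrafilter_le_nhds' (U.map fun r => u r j) hmem
    exact ⟨l, hl⟩
  choose l hl using hlim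
  have hpos := (continuous_posPart.tendsto (a i - l i)).comp ((hl i).const_sub (a i))
  rwa [posPart_eq_zero.mpr (sub_nonpos.mpr (hle U l hU hl i))] at hpos

variable {S : α → Finset ι}

lemma tendsto_sum_posPart_sub (hb : Summable b) (hab : ∀ i, |a i| ≤ b i)
    (hub : ∀ᶠ r in F, ∀ i ∈ S r, |u r i| ≤ b i)
    (hau : ∀ i, Tendsto (fun r => (a i - u r i)⁺) F (𝓝 0)) :
    Tendsto (fun r => ∑ i ∈ S r, (a i - u r i)⁺) F (𝓝 0) := by
  have h := tendsto_tsum_of_dominated_convergence (𝓕 := F) (g := fun _ => (0 : ℝ))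
    (f := fun r => (S r : Set ι).indicator fun i => (a i - u r i)⁺) (hb.mul_left 2) (fun i => ?_) ?_
  · rw [tsum_zero] at h
    exact h.congr fun r => (sum_eq_tsum_indicator _ _).symm
  · refine squeeze_zero (fun r => ?_) (fun r => ?_) (hau i)
    · exact indicator_nonneg (fun _ _ => posPart_nonneg _) i
    · exact indicator_le_self' (fun _ _ => posPart_nonneg _) i
  · filter_upwards [hub] with r hr i
    have hbi : 0 ≤ b i := (abs_nonneg _).trans (hab i)
    by_cases hi : i ∈ S r
    · rw [indicator_of_mem (Finset.mem_coe.mpr hi), Real.norm_of_nonneg (posPart_nonneg _)]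
      exact max_le (by linarith [le_abs_self (a i), hab i, neg_abs_le (u r i), hr i hi])
        (by positivity)
    · rw [indicator_of_notMem (by simpa using hi), norm_zero]
      positivity

/-- A one-sided Scheffé lemma: in `|u - a| = 2 (a - u)⁺ + (u - a)` the last term has nonpositive
sum. -/
lemma tendsto_sum_abs_sub (hb : Summable b) (hab : ∀ i, |a i| ≤ b i)
    (hub : ∀ᶠ r in F, ∀ i ∈ S r, |u r i| ≤ b i)
    (hau : ∀ i, Tendsto (fun r => (a i - u r i)⁺) F (𝓝 0))
    (hsum : ∀ᶠ r in F, ∑ i ∈ S r, u r i ≤ ∑ i ∈ S r, a i) :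
    Tendsto (fun r => ∑ i ∈ S r, |u r i - a i|) F (𝓝 0) := by
  have h := (tendsto_sum_posPart_sub hb hab hub hau).const_mul 2
  rw [mul_zero] at h
  refine squeeze_zero' (.of_forall fun r => Finset.sum_nonneg fun i _ => abs_nonneg _) ?_ h
  filter_upwards [hsum] with r hr
  have habs (i : ι) : |u r i - a i| = 2 * (a i - u r i)⁺ + (u r i - a i) := by
    rw [abs_sub_comm]
    linarith [posPart_add_negPart (a i - u r i), posPart_sub_negPart (a i - u r i)]
  calc ∑ i ∈ S r, |u r i - a i|
      = 2 * ∑ i ∈ S r, (a i - u r i)⁺ + (∑ i ∈ S r, u r i - ∑ i ∈ S r, a i) := by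
        simp only [habs, Finset.sum_add_distrib, Finset.sum_sub_distrib, Finset.mul_sum]
    _ ≤ 2 * ∑ i ∈ S r, (a i - u r i)⁺ := by linarith

lemma tendsto_sum_of_tendsto_sum_abs_sub (hS : Tendsto S F atTop) (ha : Summable a)
    (h : Tendsto (fun r => ∑ i ∈ S r, |u r i - a i|) F (𝓝 0)) :
    Tendsto (fun r => ∑ i ∈ S r, u r i) F (𝓝 (∑' i, a i)) := by
  have hdiff : Tendsto (fun r => ∑ i ∈ S r, (u r i - a i)) F (𝓝 0) :=
    squeeze_zero_norm (fun r => Finset.abs_sum_le_sum_abs _ _) h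
  simpa only [Function.comp_apply, ← Finset.sum_add_distrib, sub_add_cancel, zero_add] using
    hdiff.add (ha.hasSum.comp hS)

lemma tendsto_apply_of_tendsto_sum_abs_sub (hS : Tendsto S F atTop)
    (h : Tendsto (fun r => ∑ i ∈ S r, |u r i - a i|) F (𝓝 0)) (i : ι) :
    Tendsto (fun r => u r i) F (𝓝 (a i)) := by
  rw [tendsto_iff_norm_sub_tendsto_zero]
  refine squeeze_zero' (.of_forall fun r => norm_nonneg _) ?_ h
  filter_upwards [hS.eventually_ge_atTop {i}] with r hr
  exact Finset.single_le_sum (f := fun j => |u r j - a j|) (fun j _ => abs_nonneg _)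
    (Finset.singleton_subset_iff.mp hr)

end OneSidedConvergence

section Relaxation

variable {n : ℕ}

lemma tendsto_idx_atTop : Tendsto (idx n) atTop atTop :=
  tendsto_atTop_finset_of_monotone (fun _ _ hrs _ hd => mem_idx.mpr ((mem_idx.mp hd).trans hrs))
    fun _ => ⟨_, mem_idx.mpr le_rfl⟩

lemma tendsto_idx_two_mul_atTop : Tendsto (fun r => idx n (2 * r)) atTop atTop :=
  tendsto_idx_atTop.comp (tendsto_id.const_mul_atTop' two_pos)

lemma eventually_mem_idx_two_mul (d : (Fin n → ℕ) × ℕ) : ∀ᶠ r in atTop, d ∈ idx n (2 * r) := by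
  filter_upwards [tendsto_idx_two_mul_atTop.eventually_ge_atTop {d}] with r hr
    using Finset.singleton_subset_iff.mp hr

variable {m : ℕ} {lam : Measure (Fin n → ℝ)} {f : (Fin n → ℝ) → ℝ} {γ : ℝ}
  {g : Fin m → (Fin n → ℕ) → ℝ} {t : Fin m → ℕ}
  (hlam : ∀ᵐ x ∂lam, x ∈ Icc 0 1) (hfγ : ∀ᵐ x ∂lam, f x ∈ Icc 0 γ)

include hlam hfγ

lemma Feasible.abs_le_pow [IsProbabilityMeasure lam] {r : ℕ} {φ : (Fin n → ℕ) × ℕ → ℝ}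
    (hφ : Feasible n m γ g t (graphMoment lam f) r φ) (hγ : 0 ≤ γ) {d : (Fin n → ℕ) × ℕ}
    (hd : d ∈ idx n (2 * r)) : |φ d| ≤ γ ^ d.2 := by
  obtain ⟨hM, -, hY, hmom⟩ := hφ
  refine abs_apply_le_pow hM hY (fun α hα => ?_) hγ hd
  rw [hmom _ zero_le_one (mem_idx.mp hα)]
  simpa only [pow_zero] using graphMoment_le_pow hlam hfγ (α, 0)

lemma graphMoment_le_of_tendsto_feasible [IsFiniteMeasure lam] (hf : AEMeasurable f lam)
    (hγ : 0 < γ) {F : Filter ℕ} [F.NeBot] (hF : F ≤ atTop) {φ : ℕ → (Fin n → ℕ) × ℕ → ℝ}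
    (hφ : ∀ᶠ r in F, Feasible n m γ g t (graphMoment lam f) r (φ r)) {l : (Fin n → ℕ) × ℕ → ℝ}
    (hl : ∀ d, Tendsto (fun r => φ r d) F (𝓝 (l d))) : graphMoment lam f ≤ l := by
  have hsupp (p : PolyXY n) : ∀ᶠ r in F, p.coeff.support ⊆ idx n (r - 1) :=
    hF ((tendsto_idx_atTop.comp (tendsto_sub_atTop_nat 1)).eventually_ge_atTop _)
  refine graphMoment_le hlam hf hfγ hγ (fun p => ?_) (fun p => ?_) fun d hd => ?_
  · refine ge_of_tendsto (tendsto_rieszFunctional hl (p * p)) ?_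
    filter_upwards [hφ, hF (tendsto_idx_atTop.eventually_ge_atTop p.coeff.support)]
      with r hr hp
    rw [← one_mul (p * p)]
    exact rieszFunctional_mul_mul_self_nonneg (momMat_eq_localizingMatrix (φ r) r ▸ hr.1) hp
  · refine ge_of_tendsto (tendsto_rieszFunctional hl _) ?_
    filter_upwards [hφ, hsupp p] with r hr hp
    exact rieszFunctional_mul_mul_self_nonneg
      (locMatY_eq_localizingMatrix (φ r) γ r ▸ hr.2.2.1) hp
  · refine tendsto_nhds_unique (hl d) (tendsto_const_nhds.congr' ?_)
    filter_upwards [hφ, hF (eventually_mem_idx_two_mul d)] with r hr hdr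
    exact (hr.2.2.2 d hd (mem_idx.mp hdr)).symm

lemma tendsto_posPart_graphMoment_sub [IsProbabilityMeasure lam] (hf : AEMeasurable f lam)
    (hγ : 0 < γ) {φ : ℕ → (Fin n → ℕ) × ℕ → ℝ}
    (hφ : ∀ᶠ r in atTop, Feasible n m γ g t (graphMoment lam f) r (φ r))
    (d : (Fin n → ℕ) × ℕ) :
    Tendsto (fun r => (graphMoment lam f d - φ r d)⁺) atTop (𝓝 0) := by
  refine tendsto_posPart_sub_of_le_ultrafilter_limits (b := fun d => γ ^ d.2) (fun d => ?_)
    (fun U l hU hl => graphMoment_le_of_tendsto_feasible hlam hfγ hf hγ hU (hU hφ) hl) d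
  filter_upwards [hφ, eventually_mem_idx_two_mul d] with r hr hd
    using hr.abs_le_pow hlam hfγ hγ.le hd

end Relaxation

lemma summable_mul_pow_of_summable_mul_max_pow {ι : Type*} {θ : ι → ℝ} {k : ι → ℕ} {γ : ℝ}
    (hθ : ∀ i, 0 ≤ θ i) (hγ : 0 ≤ γ) (h : Summable fun i => θ i * max 1 γ ^ (k i + 1)) :
    Summable fun i => θ i * γ ^ k i := by
  refine h.of_nonneg_of_le (fun i => mul_nonneg (hθ i) (pow_nonneg hγ _)) fun i =>
    mul_le_mul_of_nonneg_left ?_ (hθ i)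
  calc γ ^ k i ≤ max 1 γ ^ k i := pow_le_pow_left₀ hγ (le_max_right 1 γ) _
    _ ≤ max 1 γ ^ (k i + 1) := pow_le_pow_right₀ (le_max_left 1 γ) (k i).le_succ

theorem weighted_sdp_convergence_all_moments_general {n m : ℕ} {γ : ℝ} (hγ : 0 < γ)
    {g : Fin m → (Fin n → ℕ) → ℝ} {t : Fin m → ℕ}
    {lam : Measure (Fin n → ℝ)} [IsProbabilityMeasure lam] (hlam : ∀ᵐ x ∂lam, x ∈ Icc 0 1)
    (hg : ∀ j, ∀ᵐ x ∂lam, 0 ≤ polyEval n (2 * t j) (g j) x)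
    {f : (Fin n → ℝ) → ℝ} (hf : AEMeasurable f lam) (hfγ : ∀ᵐ x ∂lam, f x ∈ Icc 0 γ)
    {θ : (Fin n → ℕ) × ℕ → ℝ} (hθ : ∀ d, 0 < θ d)
    (hθsum : Summable fun d : (Fin n → ℕ) × ℕ => θ d * γ ^ d.2)
    {φ : ℕ → (Fin n → ℕ) × ℕ → ℝ}
    (hopt : ∀ᶠ r in atTop, Feasible n m γ g t (graphMoment lam f) r (φ r) ∧
      ∀ ψ, Feasible n m γ g t (graphMoment lam f) r ψ →
        ∑ d ∈ idx n (2 * r), θ d * φ r d ≤ ∑ d ∈ idx n (2 * r), θ d * ψ d) :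
    Tendsto (fun r => ∑ d ∈ idx n (2 * r), θ d * φ r d) atTop
      (𝓝 (∑' d, θ d * graphMoment lam f d)) ∧
    ∀ d, Tendsto (fun r => φ r d) atTop (𝓝 (graphMoment lam f d)) := by
  have habs {x : ℝ} (d : (Fin n → ℕ) × ℕ) (hx : |x| ≤ γ ^ d.2) : |θ d * x| ≤ θ d * γ ^ d.2 := by
    rw [abs_mul, abs_of_pos (hθ d)]
    exact mul_le_mul_of_nonneg_left hx (hθ d).le
  have hmom (d : (Fin n → ℕ) × ℕ) : |θ d * graphMoment lam f d| ≤ θ d * γ ^ d.2 := by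
    refine habs d ?_
    rw [abs_of_nonneg (graphMoment_nonneg hlam hfγ d)]
    exact graphMoment_le_pow hlam hfγ d
  have hlow (d : (Fin n → ℕ) × ℕ) :
      Tendsto (fun r => (θ d * graphMoment lam f d - θ d * φ r d)⁺) atTop (𝓝 0) := by
    have h := tendsto_posPart_graphMoment_sub hlam hfγ hf hγ (hopt.mono fun _ hr => hr.1) d
    simpa only [posPart_def, mul_sub, mul_zero, mul_max_of_nonneg _ _ (hθ d).le]
      using h.const_mul (θ d)
  have hdist : Tendsto (fun r => ∑ d ∈ idx n (2 * r), |θ d * φ r d - θ d * graphMoment lam f d|)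
      atTop (𝓝 0) := by
    refine tendsto_sum_abs_sub hθsum hmom ?_ hlow ?_
    · filter_upwards [hopt] with r hr d hd using habs d (hr.1.abs_le_pow hlam hfγ hγ.le hd)
    · filter_upwards [hopt] with r hr using hr.2 _ (feasible_graphMoment hlam hf hfγ hg r)
  refine ⟨tendsto_sum_of_tendsto_sum_abs_sub tendsto_idx_two_mul_atTop
    (hθsum.of_norm_bounded hmom) hdist, fun d => ?_⟩
  simpa only [inv_mul_cancel_left₀ (hθ d).ne'] using
    (tendsto_apply_of_tendsto_sum_abs_sub tendsto_idx_two_mul_atTop hdist d).const_mul (θ d)⁻¹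

open Filter Topology in
/-- For strictly positive weights `θ` with
`Σ_d θ_d max(1,γ)^{d_y+1} < ∞`, if `φ^r` is an optimal solution of the order-`r`
relaxation with weighted objective `Σ_{|d| ≤ 2r} θ_d φ_d` for each admissible `r`, then
the optimal values converge to `𝒯(μ) = Σ_d θ_d μ_d` and `φ^r_d → μ_d` for every
`d ∈ ℕ^n × ℕ`. -/
theorem weighted_sdp_convergence_all_moments
    (n m : ℕ) (hn : 1 ≤ n) (hm : 1 ≤ m)
    (γ : ℝ) (hγ : 0 < γ)
    (g : Fin m → (Fin n → ℕ) → ℝ) (t : Fin m → ℕ)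
    (hgdeg : ∀ j e, 2 * t j < ∑ i, e i → g j e = 0)
    (hg1t : t ⟨0, hm⟩ = 1)
    (hg1 : ∀ x : Fin n → ℝ,
      polyEval n (2 * t ⟨0, hm⟩) (g ⟨0, hm⟩) x = (n : ℝ) - ∑ i, x i ^ 2)
    (X : Set (Fin n → ℝ))
    (hXdef : X = {x | ∀ j, 0 ≤ polyEval n (2 * t j) (g j) x})
    (hXsub : X ⊆ Icc 0 1) (hXc : IsCompact X)
    (lam : Measure (Fin n → ℝ)) [IsProbabilityMeasure lam] (hlam : lam Xᶜ = 0)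
    (f : (Fin n → ℝ) → ℝ) (hf : Measurable f) (hfY : ∀ x ∈ X, f x ∈ Icc 0 γ)
    (μmom : ((Fin n → ℕ) × ℕ) → ℝ)
    (hμmom : ∀ d : (Fin n → ℕ) × ℕ,
      μmom d = ∫ x, (∏ i, x i ^ d.1 i) * f x ^ d.2 ∂lam)
    (θ : ((Fin n → ℕ) × ℕ) → ℝ) (hθ : ∀ d, 0 < θ d)
    (hθsum : Summable fun d : (Fin n → ℕ) × ℕ => θ d * max 1 γ ^ (d.2 + 1))
    (φseq : ℕ → ((Fin n → ℕ) × ℕ) → ℝ)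
    (hopt : ∀ r : ℕ, 1 ≤ r → (∀ j, t j ≤ r) →
      Feasible n m γ g t μmom r (φseq r) ∧
      ∀ φ : ((Fin n → ℕ) × ℕ) → ℝ, Feasible n m γ g t μmom r φ →
        ∑ d ∈ idx n (2 * r), θ d * φseq r d ≤ ∑ d ∈ idx n (2 * r), θ d * φ d) :
    Tendsto (fun r => ∑ d ∈ idx n (2 * r), θ d * φseq r d) atTop
      (𝓝 (∑' d : (Fin n → ℕ) × ℕ, θ d * μmom d)) ∧
    ∀ d : (Fin n → ℕ) × ℕ, Tendsto (fun r => φseq r d) atTop (𝓝 (μmom d)) := by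
  obtain rfl : μmom = graphMoment lam f := funext hμmom
  have hX : ∀ᵐ x ∂lam, x ∈ X := hlam
  refine weighted_sdp_convergence_all_moments_general hγ (hX.mono hXsub)
    (fun j => hX.mono fun x hx => (hXdef ▸ hx :) j) hf.aemeasurable (hX.mono hfY) hθ
    (summable_mul_pow_of_summable_mul_max_pow (fun d => (hθ d).le) hγ.le hθsum) ?_
  filter_upwards [eventually_ge_atTop 1, eventually_all.mpr fun j => eventually_ge_atTop (t j)]
    with r hr htr using hopt r hr htr
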